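/- Let λ : [t₀,∞) → (0,∞) be differentiable and nondecreasing, let x : [t₀,∞) → H be differentiable, and assume the map t ↦ ∇Φ_{λ(t)}(x(t)) is differentiable at t ≥ t₀. Then ⟨(d/dt)[∇Φ_{λ(t)}(x(t))], ẋ(t)⟩ ≥ −2·(λ'(t)/λ(t))·‖∇Φ_{λ(t)}(x(t))‖·‖ẋ(t)‖. -/

import Mathlib

open Set MeasureTheory Filter Real

noncomputable section

/-- Convexity for extended-real-valued functions. -/
def EConvexOn {H : Type*} [NormedAddCommGroup H] [NormedSpace ℝ H] (f : H → EReal) : Prop :=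
  ∀ x y : H, ∀ a c : ℝ, 0 ≤ a → 0 ≤ c → a + c = 1 →
    f (a • x + c • y) ≤ (a : EReal) * f x + (c : EReal) * f y

/-- `p` is the proximal point of `f` with parameter `l` at `x`, i.e. the (unique) minimizer of
`y ↦ f y + ‖x - y‖² / (2l)`. -/
def IsProxPt {H : Type*} [NormedAddCommGroup H] [InnerProductSpace ℝ H]
    (f : H → EReal) (l : ℝ) (x p : H) : Prop :=
  ∀ y : H, f p + ((‖x - p‖ ^ 2 / (2 * l) : ℝ) : EReal)
      ≤ f y + ((‖x - y‖ ^ 2 / (2 * l) : ℝ) : EReal)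

/-- The Moreau envelope of `f` with parameter `l` (as a real number). -/
def moreau {H : Type*} [NormedAddCommGroup H] [InnerProductSpace ℝ H]
    (f : H → EReal) (l : ℝ) (x : H) : ℝ :=
  (⨅ y : H, f y + ((‖x - y‖ ^ 2 / (2 * l) : ℝ) : EReal)).toReal

/-- A proximal point of a proper function has a finite value. -/
theorem IsProxPt.ne_top {H : Type*} [NormedAddCommGroup H] [InnerProductSpace ℝ H]
    {f : H → EReal} (hproper : ∃ y, f y ≠ ⊤) {l : ℝ} {x p : H} (hp : IsProxPt f l x p) :
    f p ≠ ⊤ := by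
  obtain ⟨y, hy⟩ := hproper
  intro htop
  have h := hp y
  rw [htop, EReal.top_add_coe, top_le_iff] at h
  exact EReal.add_ne_top hy (EReal.coe_ne_top _) h

/-- The Yosida gradient `l⁻¹ • (x - p)` at a proximal point `p` is a subgradient there. -/
theorem IsProxPt.subgradient {H : Type*} [NormedAddCommGroup H] [InnerProductSpace ℝ H]
    {f : H → EReal} (hconv : EConvexOn f) {l : ℝ} (hl : 0 < l) {x p q : H}
    (hp : IsProxPt f l x p) {a b : ℝ} (ha : f p = a) (hb : f q = b) :
    a + inner ℝ (l⁻¹ • (x - p)) (q - p) ≤ b := by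
  have key : ∀ c : ℝ, 0 < c → c ≤ 1 →
      a - b + inner ℝ (l⁻¹ • (x - p)) (q - p) ≤ c * (‖q - p‖ ^ 2 / (2 * l)) := by
    intro c hc hc1
    have h1 := hp ((1 - c) • p + c • q)
    have h2 := hconv p q (1 - c) c (by linarith) hc.le (by ring)
    have h3 := h1.trans (add_le_add_left h2 _)
    rw [ha, hb] at h3
    norm_cast at h3
    have e : x - ((1 - c) • p + c • q) = (x - p) - c • (q - p) := by module
    rw [e, norm_sub_sq_real (x - p), inner_smul_right, norm_smul, Real.norm_of_nonneg hc.le] at h3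
    rw [inner_smul_left]
    simp only [conj_trivial]
    set I := inner ℝ (x - p) (q - p)
    have h4 : c * (a - b + l⁻¹ * I) ≤ c * (c * (‖q - p‖ ^ 2 / (2 * l))) := by
      have : (‖x - p‖ ^ 2 - 2 * (c * I) + (c * ‖q - p‖) ^ 2) / (2 * l)
          = ‖x - p‖ ^ 2 / (2 * l) - c * (l⁻¹ * I) + c * (c * (‖q - p‖ ^ 2 / (2 * l))) := by
        field_simp
      rw [this] at h3
      linarith
    exact le_of_mul_le_mul_left h4 hc
  have hlim : Tendsto (fun c : ℝ => c * (‖q - p‖ ^ 2 / (2 * l))) (nhdsWithin 0 (Ioi 0))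
      (nhds 0) := by
    have : Continuous fun c : ℝ => c * (‖q - p‖ ^ 2 / (2 * l)) := by fun_prop
    simpa using (this.tendsto 0).mono_left nhdsWithin_le_nhds
  have := ge_of_tendsto hlim (by
    filter_upwards [Ioc_mem_nhdsGT (zero_lt_one' ℝ)] with c hc
    exact key c hc.1 hc.2)
  linarith

/-- Yosida gradients are monotone with respect to the proximal points, even for different
parameters. -/
theorem IsProxPt.inner_nonneg {H : Type*} [NormedAddCommGroup H] [InnerProductSpace ℝ H]
    {f : H → EReal} (hbot : ∀ y, f y ≠ ⊥) (hproper : ∃ y, f y ≠ ⊤) (hconv : EConvexOn f)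
    {l m : ℝ} (hl : 0 < l) (hm : 0 < m) {x y p q : H}
    (hp : IsProxPt f l x p) (hq : IsProxPt f m y q) :
    0 ≤ inner ℝ (m⁻¹ • (y - q) - l⁻¹ • (x - p)) (q - p) := by
  have ha := (EReal.coe_toReal (hp.ne_top hproper) (hbot p)).symm
  have hb := (EReal.coe_toReal (hq.ne_top hproper) (hbot q)).symm
  have h1 := hp.subgradient hconv hl ha hb
  have h2 := hq.subgradient hconv hm hb ha
  rw [← neg_sub q p, inner_neg_right] at h2
  rw [inner_sub_left]
  linarith

/-- If two curves have increments with nonnegative inner product to the right of `t`, then so do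
their derivatives. -/
theorem inner_derivs_nonneg_of_inner_increments_nonneg {H : Type*} [NormedAddCommGroup H]
    [InnerProductSpace ℝ H] {g p : ℝ → H} {g' p' : H} {t : ℝ}
    (hg : HasDerivAt g g' t) (hp : HasDerivAt p p' t)
    (h : ∀ s > t, 0 ≤ inner ℝ (g s - g t) (p s - p t)) : 0 ≤ inner ℝ g' p' := by
  have hle : nhdsWithin t (Ioi t) ≤ nhdsWithin t {t}ᶜ :=
    nhdsWithin_mono t fun s hs => ne_of_gt hs
  have hlim := ((hasDerivAt_iff_tendsto_slope.1 hg).mono_left hle).inner (𝕜 := ℝ)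
    ((hasDerivAt_iff_tendsto_slope.1 hp).mono_left hle)
  refine ge_of_tendsto hlim ?_
  filter_upwards [self_mem_nhdsWithin] with s hs
  have hst : 0 < (s - t)⁻¹ := inv_pos.2 (sub_pos.2 hs)
  simp only [slope_def_module, inner_smul_left, inner_smul_right, conj_trivial]
  exact mul_nonneg hst.le (mul_nonneg hst.le (h s hs))

/-- The inner product bound extracted from `0 ≤ ⟪D, v - a g - l D⟫`. -/
theorem inner_lower_bound_of_inner_nonneg {H : Type*} [NormedAddCommGroup H]
    [InnerProductSpace ℝ H] {D v g : H} {a l : ℝ} (ha : 0 ≤ a) (hl : 0 < l)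
    (h : 0 ≤ inner ℝ D (v - (a • g + l • D))) :
    -(2 * (a / l) * ‖g‖ * ‖v‖) ≤ inner ℝ D v := by
  rw [inner_sub_right, inner_add_right, inner_smul_right, inner_smul_right,
    real_inner_self_eq_norm_sq] at h
  have hDv := abs_le.1 (abs_real_inner_le_norm D v)
  have hDg := abs_le.1 (abs_real_inner_le_norm D g)
  have hag : -(a * (‖D‖ * ‖g‖)) ≤ a * inner ℝ D g := by
    have := mul_le_mul_of_nonneg_left hDg.1 ha
    linarith
  have hD := norm_nonneg D
  have hv := norm_nonneg v
  have hG : 0 ≤ a * ‖g‖ := mul_nonneg ha (norm_nonneg g)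
  have e : 2 * (a / l) * ‖g‖ * ‖v‖ = 2 * (a * ‖g‖) * ‖v‖ / l := by ring
  rw [e, ← neg_div, div_le_iff₀ hl]
  rcases le_total ‖v‖ (a * ‖g‖) with hcase | hcase
  · have hbound : l * ‖D‖ ≤ ‖v‖ + a * ‖g‖ := by
      rcases hD.eq_or_lt with h0 | h0
      · rw [← h0]; linarith
      · refine le_of_mul_le_mul_left ?_ h0
        nlinarith
    have h1 := mul_le_mul_of_nonneg_right hDv.1 hl.le
    have h2 := mul_le_mul_of_nonneg_right (hbound.trans (add_le_add_left hcase _)) hv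
    nlinarith
  · have h1 : l * ‖D‖ ^ 2 - a * ‖g‖ * ‖D‖ ≤ inner ℝ D v := by linarith
    have h2 := mul_le_mul_of_nonneg_right h1 hl.le
    nlinarith [sq_nonneg (2 * (l * ‖D‖) - a * ‖g‖), mul_le_mul_of_nonneg_left hcase hG,
      mul_nonneg hG hv]

theorem moreau_gradient_derivative_inner_lower_bound
    {H : Type*} [NormedAddCommGroup H] [InnerProductSpace ℝ H] [CompleteSpace H]
    (Φ : H → EReal)
    (hΦbot : ∀ y, Φ y ≠ ⊥) (hΦproper : ∃ y, Φ y ≠ ⊤)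
    (hΦconv : EConvexOn Φ) (hΦlsc : LowerSemicontinuous Φ)
    (hargmin : ∃ z, ∀ y, Φ z ≤ Φ y)
    (t₀ : ℝ) (ht₀ : 0 < t₀)
    (lam lam' : ℝ → ℝ)
    (hlampos : ∀ t ≥ t₀, 0 < lam t)
    (hlam' : ∀ t ≥ t₀, HasDerivAt lam (lam' t) t)
    (hlammono : MonotoneOn lam (Set.Ici t₀))
    (x v p : ℝ → H)
    (hx : ∀ t ≥ t₀, HasDerivAt x (v t) t)
    (hp : ∀ t ≥ t₀, IsProxPt Φ (lam t) (x t) (p t))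
    :
    ∀ t ≥ t₀, ∀ D : H, HasDerivAt (fun s => (lam s)⁻¹ • (x s - p s)) D t →
      (inner ℝ D (v t) : ℝ)
        ≥ -(2 * (lam' t / lam t) * ‖(lam t)⁻¹ • (x t - p t)‖ * ‖v t‖) := by
  intro t ht D hD
  have hl := hlampos t ht
  have ha : 0 ≤ lam' t := by
    have h := inner_derivs_nonneg_of_inner_increments_nonneg (hlam' t ht) (hasDerivAt_id t) fun s hs => by
      have hs' : t < s := hs
      have := hlammono ht (ht.trans hs'.le) hs'.le
      simpa using mul_nonneg (sub_nonneg.2 hs'.le) (sub_nonneg.2 this)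
    simpa using h
  have hpeq : (fun s => x s - lam s • ((lam s)⁻¹ • (x s - p s))) =ᶠ[nhds t] p := by
    filter_upwards [(hlam' t ht).continuousAt.eventually_ne hl.ne'] with s hs
    rw [smul_inv_smul₀ hs, sub_sub_cancel]
  have hp' := (((hx t ht).sub ((hlam' t ht).smul hD)).congr_of_eventuallyEq hpeq.symm)
  have hmono := inner_derivs_nonneg_of_inner_increments_nonneg hD hp' fun s hs =>
    (hp t ht).inner_nonneg hΦbot hΦproper hΦconv hl (hlampos s (ht.trans (le_of_lt hs)))
      (hp s (ht.trans (le_of_lt hs)))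
  exact inner_lower_bound_of_inner_nonneg ha hl (by rwa [add_comm] at hmono)
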